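/- arXiv:2511.07492 — 4 statements merged into one kernel-verified Lean document; each statement's English description precedes it below -/
import Mathlib

section
/- Let G be a group acting on a type Ω such that for every natural number n, the diagonal action of G on n-tuples from Ω (i.e., on functions Fin n → Ω) has only finitely many orbits. Then for every m and every tuple a : Fin m → Ω, the pointwise stabilizer H = {g ∈ G : ∀ i, g • (a i) = a i} also has, for every natural number n, only finitely many orbits on functions Fin n → Ω. -/
/-! Two points of a `G`-set `X × Y` with the same first coordinate `x` are `G`-equivalent exactly
when their second coordinates are equivalent under the stabilizer of `x`, so the orbits of the
stabilizer on `Y` embed into the orbits of `G` on `X × Y`. The pointwise stabilizer of a tuple `a`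
is the stabilizer of `a` as a point of a power of `Ω`. -/

section Orbits

open MulAction

variable {G X Y : Type*} [Group G] [MulAction G X] [MulAction G Y]

theorem prodMk_mem_orbit_prodMk_iff (x : X) {y y' : Y} :
    (x, y) ∈ orbit G (x, y') ↔ y ∈ orbit (stabilizer G x) y' := by
  simp only [mem_orbit_iff, Prod.smul_mk, Prod.mk.injEq, Subtype.exists, mem_stabilizer_iff,
    Subgroup.mk_smul, exists_prop]

/-- The map from the orbits of the stabilizer of `x` on `Y` to the orbits of `G` on `X × Y` induced
by `y ↦ (x, y)`. It transfers finiteness from `G` to the stabilizer. -/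
def stabilizerOrbitToProdOrbit (x : X) :
    orbitRel.Quotient (stabilizer G x) Y → orbitRel.Quotient G (X × Y) :=
  Quotient.map (Prod.mk x) fun _ _ => (prodMk_mem_orbit_prodMk_iff x).mpr

theorem stabilizerOrbitToProdOrbit_injective (x : X) :
    Function.Injective (stabilizerOrbitToProdOrbit (G := G) (Y := Y) x) := by
  rintro ⟨y⟩ ⟨y'⟩ h
  exact Quotient.sound ((prodMk_mem_orbit_prodMk_iff x).mp (Quotient.exact h))

theorem finite_orbitRel_quotient_stabilizer [Finite (orbitRel.Quotient G (X × Y))] (x : X) :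
    Finite (orbitRel.Quotient (stabilizer G x) Y) :=
  .of_injective _ (stabilizerOrbitToProdOrbit_injective x)

theorem finite_orbitRel_quotient_of_surjective [Finite (orbitRel.Quotient G X)] (f : X →[G] Y)
    (hf : Function.Surjective f) : Finite (orbitRel.Quotient G Y) := by
  have map_orbitRel (x x' : X) : orbitRel G X x x' → orbitRel G Y (f x) (f x') := by
    rintro ⟨g, rfl⟩
    exact ⟨g, (map_smul f g x').symm⟩
  exact .of_surjective (Quotient.map f map_orbitRel) (Quotient.map_surjective map_orbitRel hf)

end Orbits

section Tuples

open MulAction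

variable {G Ω ι κ : Type*} [Group G] [MulAction G Ω]

theorem finite_orbitRel_quotient_arrow_of_equiv [Finite (orbitRel.Quotient G (ι → Ω))]
    (e : ι ≃ κ) : Finite (orbitRel.Quotient G (κ → Ω)) :=
  finite_orbitRel_quotient_of_surjective ⟨(· ∘ e.symm), fun _ _ => rfl⟩
    (e.arrowCongr (.refl Ω)).surjective

theorem finite_orbitRel_quotient_arrow_prod_arrow [Finite (orbitRel.Quotient G (ι ⊕ κ → Ω))] :
    Finite (orbitRel.Quotient G ((ι → Ω) × (κ → Ω))) :=
  finite_orbitRel_quotient_of_surjective ⟨Equiv.sumArrowEquivProdArrow ι κ Ω, fun _ _ => rfl⟩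
    (Equiv.sumArrowEquivProdArrow ι κ Ω).surjective

theorem eq_stabilizer_of_forall_mem_iff {a : ι → Ω} {H : Subgroup G}
    (hH : ∀ g : G, g ∈ H ↔ ∀ i, g • a i = a i) : H = stabilizer G a :=
  Subgroup.ext fun g => (hH g).trans funext_iff.symm

theorem stmt0_general [Finite (orbitRel.Quotient G (ι ⊕ κ → Ω))] (a : ι → Ω)
    (H : Subgroup G) (hH : ∀ g : G, g ∈ H ↔ ∀ i, g • a i = a i) :
    Finite (orbitRel.Quotient H (κ → Ω)) := by
  obtain rfl := eq_stabilizer_of_forall_mem_iff hH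
  have : Finite (orbitRel.Quotient G ((ι → Ω) × (κ → Ω))) :=
    finite_orbitRel_quotient_arrow_prod_arrow
  exact finite_orbitRel_quotient_stabilizer a

end Tuples

/-- If a group `G` acts on `Ω` oligomorphically (finitely many orbits on `n`-tuples for
every `n`), then the pointwise stabilizer of any finite tuple also acts oligomorphically. -/
theorem stmt0 {G Ω : Type*} [Group G] [MulAction G Ω]
    (hG : ∀ n : ℕ, Finite (MulAction.orbitRel.Quotient G (Fin n → Ω)))
    (m : ℕ) (a : Fin m → Ω)
    (H : Subgroup G) (hH : ∀ g : G, g ∈ H ↔ ∀ i : Fin m, g • a i = a i) :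
    ∀ n : ℕ, Finite (MulAction.orbitRel.Quotient H (Fin n → Ω)) := by
  intro n
  have := hG (m + n)
  have : Finite (MulAction.orbitRel.Quotient G (Fin m ⊕ Fin n → Ω)) :=
    finite_orbitRel_quotient_arrow_of_equiv finSumFinEquiv.symm
  exact stmt0_general a H hH
end

section
/- Let G be a group such that for every natural number n, the diagonal action of the automorphism group Aut(G) on n-tuples of elements of G (i.e., on functions Fin n → G, acting coordinatewise) has only finitely many orbits. Then G has finite exponent: there exists a positive integer N such that g^N = 1 for every g ∈ G. -/
/-!
If an automorphism fixes a tuple `t` coordinatewise, it fixes everything that `t` generates. Hence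
distinct elements `x` of the submonoid generated by an `n`-tuple `t` give `(n + 1)`-tuples `(x, t)`
in distinct orbits, and the size of that submonoid is at most the number of orbits on
`(n + 1)`-tuples. For `n = 1` this bounds the orders of all elements uniformly.
-/

open MulAction Submonoid

section Monoid

variable {A M : Type*} [Group A] [Monoid M] [MulDistribMulAction A M] {n : ℕ}

theorem smul_eq_self_of_mem_closure {a : A} {s : Set M} (ha : ∀ y ∈ s, a • y = y) {x : M}
    (hx : x ∈ closure s) : a • x = x :=
  MonoidHom.eqOn_closureM (f := MulDistribMulAction.toMonoidHom M a) (g := .id M) ha hx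

variable (A)

theorem injOn_orbitRel_mk_cons_closure_range (t : Fin n → M) :
    Set.InjOn (fun x ↦ (⟦Fin.cons x t⟧ : orbitRel.Quotient A (Fin (n + 1) → M)))
      (closure (Set.range t)) := by
  intro x _ y hy hxy
  obtain ⟨a, ha⟩ : ∃ a : A, a • (Fin.cons y t : Fin (n + 1) → M) = Fin.cons x t :=
    Quotient.exact hxy
  have a_smul_y : a • y = x := congrFun ha 0
  have a_smul_t : ∀ z ∈ Set.range t, a • z = z := by
    rintro _ ⟨i, rfl⟩
    exact congrFun ha i.succ
  rw [← a_smul_y, smul_eq_self_of_mem_closure a_smul_t hy]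

theorem finite_closure_range_of_finite_orbits [Finite (orbitRel.Quotient A (Fin (n + 1) → M))]
    (t : Fin n → M) : Finite (closure (Set.range t)) :=
  .of_injective _ (injOn_orbitRel_mk_cons_closure_range A t).injective

theorem card_closure_range_le_card_orbits [Finite (orbitRel.Quotient A (Fin (n + 1) → M))]
    (t : Fin n → M) :
    Nat.card (closure (Set.range t)) ≤ Nat.card (orbitRel.Quotient A (Fin (n + 1) → M)) :=
  Nat.card_le_card_of_injective _ (injOn_orbitRel_mk_cons_closure_range A t).injective

end Monoid

section LeftCancelMonoid

variable (A : Type*) {M : Type*} [Group A] [LeftCancelMonoid M] [MulDistribMulAction A M]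

theorem isOfFinOrder_of_finite_orbits_pairs [Finite (orbitRel.Quotient A (Fin 2 → M))] (g : M) :
    IsOfFinOrder g := by
  rw [← finite_powers, powers_eq_closure, ← Matrix.range_cons_empty g ![]]
  exact finite_closure_range_of_finite_orbits A ![g]

theorem orderOf_le_card_orbits_pairs [Finite (orbitRel.Quotient A (Fin 2 → M))] (g : M) :
    orderOf g ≤ Nat.card (orbitRel.Quotient A (Fin 2 → M)) := by
  rw [← Nat.card_submonoidPowers, powers_eq_closure, ← Matrix.range_cons_empty g ![]]
  exact card_closure_range_le_card_orbits A ![g]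

theorem stmt2_general [Finite (orbitRel.Quotient A (Fin 2 → M))] : Monoid.ExponentExists M := by
  have orderOf_pos (g : M) : 0 < orderOf g := (isOfFinOrder_of_finite_orbits_pairs A g).orderOf_pos
  have finite_range_orderOf : (Set.range (orderOf : M → ℕ)).Finite :=
    (Set.finite_Iic _).subset (Set.range_subset_iff.2 (orderOf_le_card_orbits_pairs A))
  exact Monoid.exponent_ne_zero.1
    ((Monoid.exponent_ne_zero_iff_range_orderOf_finite orderOf_pos).2 finite_range_orderOf)

end LeftCancelMonoid

/-- If the automorphism group of a group `G` acts with finitely many orbits on `n`-tuples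
of elements of `G` for every `n`, then `G` has finite exponent. -/
theorem stmt2 {G : Type*} [Group G]
    (hG : ∀ n : ℕ, Finite (MulAction.orbitRel.Quotient (MulAut G) (Fin n → G))) :
    ∃ N : ℕ, 0 < N ∧ ∀ g : G, g ^ N = 1 :=
  have := hG 2
  stmt2_general (MulAut G)
end

section
/- Let G be a group whose FC-centre Z̃(G) = {g ∈ G : the conjugacy class of g is finite} is a finite (normal) subgroup. Then the FC-centre of the quotient group G/Z̃(G) is trivial; equivalently, every element g ∈ G whose image in G/Z̃(G) has finite conjugacy class already lies in Z̃(G). -/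
theorem conjugatesOf_eq_setOf_conj {G : Type*} [Group G] (g : G) :
    conjugatesOf g = {x : G | ∃ h : G, h * g * h⁻¹ = x} :=
  Set.ext fun _ ↦ isConj_iff

theorem conjugatesOf_subset_preimage {M N : Type*} [Monoid M] [Monoid N] (f : M →* N) (a : M) :
    conjugatesOf a ⊆ f ⁻¹' conjugatesOf (f a) :=
  fun _ hb ↦ f.map_isConj hb

section FiniteKernel

variable {G H : Type*} [Group G] [Group H] (f : G →* H) [Finite f.ker]

theorem finite_preimage_singleton_of_finite_ker (h : H) : (f ⁻¹' {h}).Finite := by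
  obtain hempty | ⟨g, rfl⟩ := (f ⁻¹' {h}).eq_empty_or_nonempty
  · rw [hempty]
    exact Set.finite_empty
  · exact Finite.of_equiv f.ker (f.fiberEquivKer g).symm

theorem finite_preimage_of_finite_ker {s : Set H} (hs : s.Finite) : (f ⁻¹' s).Finite :=
  hs.preimage' fun h _ ↦ finite_preimage_singleton_of_finite_ker f h

theorem finite_conjugatesOf_of_finite_ker {g : G} (hg : (conjugatesOf (f g)).Finite) :
    (conjugatesOf g).Finite :=
  (finite_preimage_of_finite_ker f hg).subset (conjugatesOf_subset_preimage f g)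

end FiniteKernel

theorem stmt3_general {G : Type*} [Group G] (N : Subgroup G) [N.Normal] [Finite N] {g : G}
    (hg : (conjugatesOf (g : G ⧸ N)).Finite) : (conjugatesOf g).Finite := by
  have : Finite (QuotientGroup.mk' N).ker := by rwa [QuotientGroup.ker_mk']
  exact finite_conjugatesOf_of_finite_ker (QuotientGroup.mk' N) hg

/-- If the FC-centre `Z̃(G)` (the set of elements with finite conjugacy class) of a group `G`
is a finite normal subgroup, then the FC-centre of `G ⧸ Z̃(G)` is trivial: any `g : G` whose
image in the quotient has finite conjugacy class already lies in `Z̃(G)`. -/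
theorem stmt3 {G : Type*} [Group G] (Z : Subgroup G) [Z.Normal]
    (hZ : ∀ g : G, g ∈ Z ↔ ({x : G | ∃ h : G, h * g * h⁻¹ = x}).Finite)
    (hfin : Finite Z) (g : G)
    (hg : ({x : G ⧸ Z | ∃ h : G ⧸ Z, h * (g : G ⧸ Z) * h⁻¹ = x}).Finite) :
    g ∈ Z := by
  rw [← conjugatesOf_eq_setOf_conj] at hg
  exact (hZ g).2 (conjugatesOf_eq_setOf_conj g ▸ stmt3_general Z hg)
end

section
/- Let B be an abelian group (written additively) and let H be a group acting on B by group automorphisms. Assume: (i) there exists a natural number n such that every H-orbit in B has at most n elements, and (ii) for every h ∈ H the fixed-point subgroup C_B(h) = {b ∈ B : h • b = b} has finite index in B. Then the subgroup [H, B] of B generated by the set {h • b − b : h ∈ H, b ∈ B} is contained in a finitely generated subgroup of B. In particular, if in addition B has finite exponent, then [H, B] is finite. -/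
/-!
Choose `b₀` whose orbit has the largest size, and let `D` be the finite-index subgroup of points
fixed by chosen elements `g` carrying `b₀` to each point of its orbit. For `d ∈ D` the orbit of
`b₀ + d` contains the translate by `d` of the orbit of `b₀`, and equals it by maximality. So
`h • (b₀ + d) = x + d` for some `x` in the orbit of `b₀`, which leaves only finitely many values for
`h • d - d = -(h • b₀) + x`. Splitting `B` into finitely many cosets of `D`, there are only finitely
many values `h • b - b` altogether.
-/

open MulAction
open scoped Pointwise

section AddGroup

variable {H B : Type*} [AddGroup B] [DistribSMul H B]

variable (B) in
/-- The fixed-point subgroup `C_B(h)` of one operator `h`, encoded as the equalizer of `b ↦ h • b`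
and the identity. Here `H` is any type of additive operators on `B`, without a group structure. -/
def fixedAddSubgroup (h : H) : AddSubgroup B :=
  (DistribSMul.toAddMonoidHom B h).eqLocus (AddMonoidHom.id B)

variable (H B) in
/-- The subgroup `[H, B]` of `B` generated by the commutators `h • b - b` of the action. -/
def actionCommutator : AddSubgroup B :=
  AddSubgroup.closure {x : B | ∃ (h : H) (b : B), h • b - b = x}

theorem mem_fixedAddSubgroup {h : H} {b : B} : b ∈ fixedAddSubgroup B h ↔ h • b = b :=
  Iff.rfl

theorem exists_finiteIndex_forall_exists_smul_eq
    (hfix : ∀ h : H, (fixedAddSubgroup B h).FiniteIndex) {b : B} (hb : (orbit H b).Finite) :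
    ∃ D : AddSubgroup B, D.FiniteIndex ∧
      ∀ d ∈ D, ∀ x ∈ orbit H b, ∃ g : H, g • b = x ∧ g • d = d := by
  have : Finite (orbit H b) := hb
  choose g hg using fun x : orbit H b => mem_orbit_iff.1 x.2
  refine ⟨⨅ x, fixedAddSubgroup B (g x), AddSubgroup.finiteIndex_iInf fun x => hfix (g x), ?_⟩
  intro d hd x hx
  exact ⟨g ⟨x, hx⟩, hg ⟨x, hx⟩, mem_fixedAddSubgroup.1 (AddSubgroup.mem_iInf.1 hd ⟨x, hx⟩)⟩

theorem orbit_add_eq_image_add {b d : B} (hfin : (orbit H (b + d)).Finite)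
    (hcard : (orbit H (b + d)).ncard ≤ (orbit H b).ncard)
    (hd : ∀ x ∈ orbit H b, ∃ g : H, g • b = x ∧ g • d = d) :
    orbit H (b + d) = (· + d) '' orbit H b := by
  have hsub : (· + d) '' orbit H b ⊆ orbit H (b + d) := by
    rintro _ ⟨x, hx, rfl⟩
    obtain ⟨g, rfl, hgd⟩ := hd x hx
    exact ⟨g, by simp only [smul_add, hgd]⟩
  refine (Set.eq_of_subset_of_ncard_le hsub ?_ hfin).symm
  rwa [Set.ncard_image_of_injective _ (add_left_injective d)]

theorem smul_sub_self_mem_of_orbit_add_eq_image {b d : B}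
    (horb : orbit H (b + d) = (· + d) '' orbit H b) (h : H) :
    h • d - d ∈ -orbit H b + orbit H b := by
  obtain ⟨x, hx, hxd⟩ : ∃ x ∈ orbit H b, x + d = h • (b + d) :=
    horb.subset (mem_orbit (b + d) h)
  have hdiff : h • d - d = -(h • b) + x := by
    rw [eq_neg_add_iff_add_eq, ← add_sub_assoc, ← smul_add, ← hxd, add_sub_cancel_right]
  rw [hdiff]
  exact Set.add_mem_add (Set.neg_mem_neg.2 (mem_orbit b h)) hx

theorem finite_smul_sub_self_of_finiteIndex (horb : ∀ b : B, (orbit H b).Finite)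
    (D : AddSubgroup B) [D.FiniteIndex]
    (hD : {x : B | ∃ h : H, ∃ d ∈ D, h • d - d = x}.Finite) :
    {x : B | ∃ (h : H) (b : B), h • b - b = x}.Finite := by
  have hcosets : (⋃ q : B ⧸ D, orbit H q.out + {x | ∃ h : H, ∃ d ∈ D, h • d - d = x} +
      {-q.out}).Finite :=
    Set.finite_iUnion fun q => ((horb q.out).add hD).add (Set.finite_singleton _)
  refine hcosets.subset ?_
  rintro _ ⟨h, b, rfl⟩
  obtain ⟨q, d, hd, rfl⟩ : ∃ q : B ⧸ D, ∃ d ∈ D, q.out + d = b := by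
    obtain ⟨d, hd⟩ := QuotientAddGroup.mk_out_eq_add D b
    exact ⟨b, -d, neg_mem d.2, by rw [hd, add_neg_cancel_right]⟩
  have hsplit : h • (q.out + d) - (q.out + d) = h • q.out + (h • d - d) + -q.out := by
    simp only [smul_add, sub_eq_add_neg, neg_add_rev, add_assoc]
  rw [hsplit]
  exact Set.mem_iUnion.2
    ⟨q, Set.add_mem_add (Set.add_mem_add (mem_orbit _ h) ⟨h, d, hd, rfl⟩) rfl⟩

theorem finite_smul_sub_self {n : ℕ}
    (horb : ∀ b : B, (orbit H b).Finite ∧ (orbit H b).ncard ≤ n)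
    (hfix : ∀ h : H, (fixedAddSubgroup B h).FiniteIndex) :
    {x : B | ∃ (h : H) (b : B), h • b - b = x}.Finite := by
  have hbdd : BddAbove (Set.range fun b : B => (orbit H b).ncard) :=
    ⟨n, Set.forall_mem_range.2 fun b => (horb b).2⟩
  obtain ⟨_, ⟨b₀, rfl⟩, hmax⟩ := hbdd.exists_isGreatest_of_nonempty (Set.range_nonempty _)
  have hb₀ : (orbit H b₀).Finite := (horb b₀).1
  obtain ⟨D, hDindex, hD⟩ := exists_finiteIndex_forall_exists_smul_eq hfix hb₀
  refine finite_smul_sub_self_of_finiteIndex (fun b => (horb b).1) D ?_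
  refine (hb₀.neg.add hb₀).subset ?_
  rintro _ ⟨h, d, hd, rfl⟩
  exact smul_sub_self_mem_of_orbit_add_eq_image
    (orbit_add_eq_image_add (horb _).1 (hmax ⟨_, rfl⟩) (hD d hd)) h

end AddGroup

theorem finite_addSubgroup_of_fg_of_isAddTorsion {B : Type*} [AddCommGroup B] {S : AddSubgroup B}
    (hS : S.FG) (htors : IsAddTorsion B) : Finite S := by
  have : AddGroup.FG S := (AddGroup.fg_iff_addSubgroup_fg S).2 hS
  exact AddCommGroup.finite_of_fg_isAddTorsion S (htors.addSubgroup S)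

theorem stmt7_general {H B : Type*} [AddCommGroup B] [DistribSMul H B] (n : ℕ)
    (horb : ∀ b : B, (orbit H b).Finite ∧ (orbit H b).ncard ≤ n)
    (hfix : ∀ h : H, (fixedAddSubgroup B h).FiniteIndex) :
    (actionCommutator H B).FG ∧ (IsAddTorsion B → Finite (actionCommutator H B)) := by
  have hfg : (actionCommutator H B).FG :=
    (AddSubgroup.fg_iff _).2 ⟨_, rfl, finite_smul_sub_self horb hfix⟩
  exact ⟨hfg, finite_addSubgroup_of_fg_of_isAddTorsion hfg⟩

/-- Let a group `H` act by automorphisms on an abelian group `B`. If all `H`-orbits in `B`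
have uniformly bounded (finite) size, and every `h ∈ H` has fixed-point subgroup of finite
index in `B`, then the subgroup `[H, B]` generated by `{h • b - b}` is contained in a
finitely generated subgroup of `B`; if moreover `B` has finite exponent, `[H, B]` is
finite. -/
theorem stmt7 {H B : Type*} [Group H] [AddCommGroup B] [DistribMulAction H B]
    (n : ℕ)
    (horb : ∀ b : B, (MulAction.orbit H b).Finite ∧ (MulAction.orbit H b).ncard ≤ n)
    (C : H → AddSubgroup B) (hC : ∀ (h : H) (b : B), b ∈ C h ↔ h • b = b)
    (hCfin : ∀ h : H, (C h).FiniteIndex) :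
    (∃ S : AddSubgroup B, S.FG ∧
        AddSubgroup.closure {x : B | ∃ (h : H) (b : B), h • b - b = x} ≤ S) ∧
      ((∃ e : ℕ, 0 < e ∧ ∀ b : B, e • b = 0) →
        Finite (AddSubgroup.closure {x : B | ∃ (h : H) (b : B), h • b - b = x})) := by
  obtain rfl : C = fixedAddSubgroup B := funext fun h => AddSubgroup.ext (hC h)
  obtain ⟨hfg, hfinite⟩ := stmt7_general n horb hCfin
  exact ⟨⟨_, hfg, le_rfl⟩, fun hexp => hfinite (ExponentExists.isAddTorsion hexp)⟩
end
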